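/- arXiv:math/0511383 — 4 statements merged into one kernel-verified Lean document; each statement's English description precedes it below -/
import Mathlib

section
/- For every real number a and all reals s, t ≥ 0, the function h₀ satisfies the planar linear integral equation h₀(a·s·t) = 1 + a·∫₀^s ∫₀^t h₀(a·u·v) dv du. In other words, g(s,t) = h₀(a·s·t) solves g(s,t) = 1 + a·∫₀^s∫₀^t g(u,v) dv du. -/
/-- The entire function `h₀(x) = ∑_{n≥0} xⁿ/(n!)²`. -/
noncomputable def h₀ (x : ℝ) : ℝ := ∑' n : ℕ, x ^ n / (n.factorial : ℝ) ^ 2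

/-!
The function `h₀` is the Bessel–Clifford function `C_0`, where `C_k(x) = ∑ xⁿ / (n! (n+k)!)`.
These satisfy `C_k' = C_{k+1}` and `C_k(x) = (k+1) C_{k+1}(x) + x C_{k+2}(x)`, so that
`v^{k+1} C_{k+1}(bv)` is a primitive of `v^k C_k(bv)`. Hence the inner integral is `t C_1(aut)`.
As a function of `u`, `C_0(aut)` has derivative `a t C_1(aut)`, so `a` times the double integral is
`C_0(ast) - C_0(0) = h₀(ast) - 1`.
-/

/-- The Bessel–Clifford function `C_k(x) = ∑_{n≥0} xⁿ/(n! (n+k)!)`, i.e. the regularized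
hypergeometric function `₀F₁(; k+1; x)`. Only orders `k : ℕ` are needed, so that factorials replace
the Gamma function and the argument may be real or complex. -/
noncomputable def besselClifford {𝕜 : Type*} [RCLike 𝕜] (k : ℕ) (x : 𝕜) : 𝕜 :=
  ∑' n : ℕ, x ^ n / (n.factorial * (n + k).factorial)

namespace besselClifford

variable {𝕜 : Type*} [RCLike 𝕜]

theorem summable_norm (k : ℕ) (x : 𝕜) :
    Summable fun n : ℕ => ‖x ^ n / (n.factorial * (n + k).factorial : 𝕜)‖ := by
  refine (Real.summable_pow_div_factorial ‖x‖).of_nonneg_of_le (fun _ => norm_nonneg _) fun n => ?_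
  have one_le_factorial : (1 : ℝ) ≤ (n + k).factorial := mod_cast (n + k).factorial_pos
  rw [norm_div, norm_pow, norm_mul, RCLike.norm_natCast, RCLike.norm_natCast]
  gcongr
  exact le_mul_of_one_le_right (by positivity) one_le_factorial

theorem hasSum (k : ℕ) (x : 𝕜) :
    HasSum (fun n : ℕ => x ^ n / (n.factorial * (n + k).factorial)) (besselClifford k x) :=
  (summable_norm k x).of_norm.hasSum

theorem apply_zero (k : ℕ) : besselClifford k (0 : 𝕜) = 1 / k.factorial := by
  rw [besselClifford, tsum_eq_single 0 fun n hn => by rw [zero_pow hn, zero_div]]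
  simp

theorem deriv_term_succ (k n : ℕ) (x : 𝕜) :
    ((n + 1 : ℕ) : 𝕜) * x ^ (n + 1 - 1) / ((n + 1).factorial * (n + 1 + k).factorial) =
      x ^ n / (n.factorial * (n + (k + 1)).factorial) := by
  rw [add_tsub_cancel_right, Nat.factorial_succ n, Nat.cast_mul, add_assoc n 1 k, add_comm 1 k]
  field_simp

theorem summable_norm_deriv_term (k : ℕ) (x : 𝕜) :
    Summable fun n : ℕ => ‖n * x ^ (n - 1) / (n.factorial * (n + k).factorial : 𝕜)‖ :=
  (summable_nat_add_iff 1).mp <| (summable_norm (k + 1) x).congr fun n =>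
    congrArg norm (deriv_term_succ k n x).symm

theorem hasSum_deriv_term (k : ℕ) (x : 𝕜) :
    HasSum (fun n : ℕ => n * x ^ (n - 1) / (n.factorial * (n + k).factorial))
      (besselClifford (k + 1) x) := by
  rw [← hasSum_nat_add_iff' 1]
  simpa only [deriv_term_succ, Finset.sum_range_one, Nat.cast_zero, zero_mul, zero_div, sub_zero]
    using hasSum (k + 1) x

theorem hasDerivAt (k : ℕ) (x : 𝕜) :
    HasDerivAt (besselClifford k) (besselClifford (k + 1) x) x := by
  let R : ℝ := ‖x‖ + 1
  rw [← (hasSum_deriv_term k x).tsum_eq]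
  refine hasDerivAt_tsum_of_isPreconnected (t := Metric.ball 0 R) (y₀ := x)
    (summable_norm_deriv_term k (R : 𝕜)) Metric.isOpen_ball (convex_ball 0 R).isPreconnected
    (fun n y _ => (hasDerivAt_pow n y).div_const _) (fun n y hy => ?_)
    (by simp [R]) (hasSum k x).summable (by simp [R])
  have norm_le : ‖y‖ ≤ ‖(R : 𝕜)‖ := by
    rw [RCLike.norm_ofReal]
    exact (mem_ball_zero_iff.mp hy).le.trans (le_abs_self R)
  simp only [norm_div, norm_mul, norm_pow]
  gcongr

theorem continuous (k : ℕ) : Continuous (besselClifford k : 𝕜 → 𝕜) :=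
  continuous_iff_continuousAt.mpr fun x => (hasDerivAt k x).continuousAt

theorem eq_succ_mul_add_mul (k : ℕ) (x : 𝕜) :
    besselClifford k x = (k + 1) * besselClifford (k + 1) x + x * besselClifford (k + 2) x := by
  refine (hasSum k x).unique ((((hasSum (k + 1) x).mul_left ((k : 𝕜) + 1)).add
    ((hasSum_deriv_term (k + 1) x).mul_left x)).congr_fun fun n => ?_)
  have mul_pow_pred : x * (n * x ^ (n - 1)) = n * x ^ n := by
    cases n with
    | zero => simp
    | succ n => rw [add_tsub_cancel_right, pow_succ]; ring
  have succ_ne_zero : (n + k + 1 : 𝕜) ≠ 0 := mod_cast (n + k).succ_ne_zero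
  rw [← mul_div_assoc x, mul_pow_pred, ← add_assoc n k 1, Nat.factorial_succ (n + k)]
  push_cast
  field_simp
  ring

theorem hasDerivAt_pow_mul_comp_mul (k : ℕ) (b x : 𝕜) :
    HasDerivAt (fun v => v ^ (k + 1) * besselClifford (k + 1) (b * v))
      (x ^ k * besselClifford k (b * x)) x := by
  have hasDerivAt_comp_mul : HasDerivAt (fun v => besselClifford (k + 1) (b * v))
      (besselClifford (k + 2) (b * x) * b) x :=
    (hasDerivAt (k + 1) (b * x)).comp x (hasDerivAt_const_mul b)
  refine ((hasDerivAt_pow (k + 1) x).mul hasDerivAt_comp_mul).congr_deriv ?_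
  rw [eq_succ_mul_add_mul k, add_tsub_cancel_right]
  push_cast
  ring

theorem integral_pow_mul_comp_mul (k : ℕ) (b t : ℝ) :
    ∫ v in (0 : ℝ)..t, v ^ k * besselClifford k (b * v) =
      t ^ (k + 1) * besselClifford (k + 1) (b * t) := by
  have continuous_integrand : Continuous fun v : ℝ => v ^ k * besselClifford k (b * v) :=
    (continuous_pow k).mul ((continuous k).comp (continuous_const_mul b))
  rw [intervalIntegral.integral_eq_sub_of_hasDerivAt
    (fun v _ => hasDerivAt_pow_mul_comp_mul k b v) (continuous_integrand.intervalIntegrable 0 t),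
    zero_pow k.succ_ne_zero, zero_mul, sub_zero]

theorem mul_integral_succ_comp_mul (k : ℕ) (b s : ℝ) :
    b * ∫ u in (0 : ℝ)..s, besselClifford (k + 1) (b * u) =
      besselClifford k (b * s) - 1 / k.factorial := by
  rw [intervalIntegral.mul_integral_comp_mul_left, mul_zero,
    intervalIntegral.integral_eq_sub_of_hasDerivAt (fun u _ => hasDerivAt k u)
      ((continuous (k + 1)).intervalIntegrable 0 (b * s)), apply_zero]

end besselClifford

theorem h₀_eq_besselClifford_zero : h₀ = besselClifford 0 := by
  funext x
  simp only [h₀, besselClifford, add_zero, sq]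

theorem stmt_0_general (a s t : ℝ) :
    h₀ (a * s * t) = 1 + a * ∫ u in (0:ℝ)..s, ∫ v in (0:ℝ)..t, h₀ (a * u * v) := by
  have inner (u : ℝ) : ∫ v in (0:ℝ)..t, h₀ (a * u * v) = t * besselClifford 1 (a * t * u) := by
    simpa [h₀_eq_besselClifford_zero, mul_right_comm a t u] using
      besselClifford.integral_pow_mul_comp_mul 0 (a * u) t
  have outer : a * t * ∫ u in (0:ℝ)..s, besselClifford 1 (a * t * u) = h₀ (a * s * t) - 1 := by
    simpa [h₀_eq_besselClifford_zero, mul_right_comm a s t] using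
      besselClifford.mul_integral_succ_comp_mul 0 (a * t) s
  simp_rw [inner]
  rw [intervalIntegral.integral_const_mul, ← mul_assoc, outer, add_sub_cancel]

/-- The function `g(s,t) = h₀(a·s·t)` solves the planar linear integral equation
`g(s,t) = 1 + a·∫₀^s ∫₀^t g(u,v) dv du`. -/
theorem stmt_0 (a s t : ℝ) (hs : 0 ≤ s) (ht : 0 ≤ t) :
    h₀ (a * s * t) = 1 + a * ∫ u in (0:ℝ)..s, ∫ v in (0:ℝ)..t, h₀ (a * u * v) :=
  stmt_0_general a s t
end

section
/- Let a ∈ ℝ and S, T > 0. If g : [0,S] × [0,T] → ℝ is continuous and satisfies g(s,t) = 1 + a·∫₀^s ∫₀^t g(u,v) dv du for all (s,t) ∈ [0,S] × [0,T], then g(s,t) = h₀(a·s·t) for all (s,t) ∈ [0,S] × [0,T]; that is, the deterministic planar equation admits h₀(a·s·t) as its unique continuous solution. -/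
/-! The function `(s, t) ↦ h₀ (a * s * t)` solves the equation: the operator
`f ↦ a * ∫₀ˢ ∫₀ᵗ f` maps the `n`-th term of its series to the next one, because integrating
`(u v) ^ n` yields `(s t) ^ (n + 1) / (n + 1) ^ 2`.

The difference of two solutions satisfies `‖d (s, t)‖ ≤ |a| * ∫₀ˢ ∫₀ᵗ ‖d‖`. Feeding a bound `M`
of `‖d‖` into this inequality `n` times gives `‖d (s, t)‖ ≤ M * (|a| s t) ^ n / (n !) ^ 2`, by the
same computation, and the right-hand side tends to zero. -/

open MeasureTheory Set Filter
open scoped Nat Topology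

theorem summable_pow_div_factorial_sq (x : ℝ) :
    Summable fun n : ℕ ↦ x ^ n / (n ! : ℝ) ^ 2 := by
  refine .of_norm_bounded (Real.summable_pow_div_factorial |x|) fun n ↦ ?_
  have one_le_factorial : (1 : ℝ) ≤ n ! := mod_cast n.factorial_pos
  rw [norm_div, norm_pow, Real.norm_eq_abs, Real.norm_of_nonneg (by positivity)]
  gcongr
  exact le_self_pow₀ one_le_factorial two_ne_zero

theorem norm_pow_div_factorial_sq_le {x R : ℝ} (hx : |x| ≤ R) (n : ℕ) :
    ‖x ^ n / (n ! : ℝ) ^ 2‖ ≤ R ^ n / (n ! : ℝ) ^ 2 := by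
  rw [norm_div, norm_pow, Real.norm_eq_abs, Real.norm_of_nonneg (by positivity)]
  gcongr

theorem continuous_h₀ : Continuous h₀ := by
  refine continuous_iff_continuousAt.2 fun x ↦ ?_
  have continuousOn_Icc : ContinuousOn h₀ (Icc (-(|x| + 1)) (|x| + 1)) :=
    continuousOn_tsum (fun n ↦ by fun_prop) (summable_pow_div_factorial_sq (|x| + 1))
      fun n y hy ↦ norm_pow_div_factorial_sq_le (abs_le.2 hy) n
  exact continuousOn_Icc.continuousAt <|
    Icc_mem_nhds (by linarith [neg_abs_le x]) (by linarith [le_abs_self x])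

theorem hasSum_h₀ (x : ℝ) : HasSum (fun n : ℕ ↦ x ^ n / (n ! : ℝ) ^ 2) (h₀ x) :=
  (summable_pow_div_factorial_sq x).hasSum

theorem intervalIntegral_intervalIntegral_eq_setIntegral_Icc
    {E : Type*} [NormedAddCommGroup E] [NormedSpace ℝ E] {f : ℝ × ℝ → E} {p q : ℝ × ℝ}
    (hpq : p ≤ q) (hf : IntegrableOn f (Icc p q)) :
    ∫ u in p.1..q.1, ∫ v in p.2..q.2, f (u, v) = ∫ r in Icc p q, f r := by
  rw [Icc_prod_eq] at hf ⊢
  rw [Measure.volume_eq_prod, setIntegral_prod f hf, integral_Icc_eq_integral_Ioc,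
    intervalIntegral.integral_of_le hpq.1]
  simp only [integral_Icc_eq_integral_Ioc, intervalIntegral.integral_of_le hpq.2]

theorem mul_setIntegral_pow_div_factorial_sq (a : ℝ) {p : ℝ × ℝ} (hp : 0 ≤ p) (n : ℕ) :
    a * ∫ r in Icc 0 p, (a * r.1 * r.2) ^ n / (n ! : ℝ) ^ 2 =
      (a * p.1 * p.2) ^ (n + 1) / ((n + 1)! : ℝ) ^ 2 := by
  rw [← intervalIntegral_intervalIntegral_eq_setIntegral_Icc hp
    (Continuous.integrableOn_Icc (by fun_prop))]
  simp only [mul_pow, intervalIntegral.integral_div, intervalIntegral.integral_const_mul,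
    intervalIntegral.integral_mul_const, integral_pow, Nat.factorial_succ, Nat.cast_mul,
    Nat.cast_succ, Prod.fst_zero, Prod.snd_zero, zero_pow n.succ_ne_zero, sub_zero]
  field_simp
  ring

theorem h₀_eq_one_add_mul_setIntegral (a : ℝ) {p : ℝ × ℝ} (hp : 0 ≤ p) :
    h₀ (a * p.1 * p.2) = 1 + a * ∫ r in Icc 0 p, h₀ (a * r.1 * r.2) := by
  have abs_le_corner {r : ℝ × ℝ} (hr : r ∈ Icc 0 p) : |a * r.1 * r.2| ≤ |a| * p.1 * p.2 := by
    obtain ⟨⟨r₁_nonneg, r₂_nonneg⟩, r₁_le, r₂_le⟩ := hr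
    rw [abs_mul, abs_mul, abs_of_nonneg r₁_nonneg, abs_of_nonneg r₂_nonneg]
    exact mul_le_mul (mul_le_mul_of_nonneg_left r₁_le (abs_nonneg a)) r₂_le r₂_nonneg
      (mul_nonneg (abs_nonneg a) hp.1)
  have hasSum_integral :
      HasSum (fun n : ℕ ↦ ∫ r in Icc 0 p, (a * r.1 * r.2) ^ n / (n ! : ℝ) ^ 2)
        (∫ r in Icc 0 p, h₀ (a * r.1 * r.2)) :=
    hasSum_integral_of_dominated_convergence
      (fun n _ ↦ (|a| * p.1 * p.2) ^ n / (n ! : ℝ) ^ 2)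
      (fun n ↦ Continuous.aestronglyMeasurable (by fun_prop))
      (fun n ↦ ae_restrict_of_forall_mem measurableSet_Icc fun r hr ↦
        norm_pow_div_factorial_sq_le (abs_le_corner hr) n)
      (.of_forall fun _ ↦ summable_pow_div_factorial_sq _)
      (integrableOn_const isCompact_Icc.measure_lt_top.ne)
      (.of_forall fun r ↦ hasSum_h₀ _)
  have hasSum_tail := hasSum_integral.mul_left a
  simp only [mul_setIntegral_pow_div_factorial_sq a hp] at hasSum_tail
  simpa using (hasSum_h₀ _).unique hasSum_tail.zero_add

theorem le_mul_pow_div_factorial_sq_of_le_mul_setIntegral {w : ℝ × ℝ → ℝ} {K M : ℝ} {q : ℝ × ℝ}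
    (hK : 0 ≤ K) (hw_nonneg : ∀ p ∈ Icc 0 q, 0 ≤ w p) (hw_le : ∀ p ∈ Icc 0 q, w p ≤ M)
    (hw : ∀ p ∈ Icc 0 q, w p ≤ K * ∫ r in Icc 0 p, w r) (n : ℕ) :
    ∀ p ∈ Icc 0 q, w p ≤ M * ((K * p.1 * p.2) ^ n / (n ! : ℝ) ^ 2) := by
  induction n with
  | zero => simpa using hw_le
  | succ n ih =>
    intro p hp
    have Icc_subset : Icc 0 p ⊆ Icc 0 q := Icc_subset_Icc_right hp.2
    have integral_le : ∫ r in Icc 0 p, w r ≤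
        ∫ r in Icc 0 p, M * ((K * r.1 * r.2) ^ n / (n ! : ℝ) ^ 2) :=
      setIntegral_mono_of_nonneg (fun r hr ↦ hw_nonneg r (Icc_subset hr))
        (fun r hr ↦ ih r (Icc_subset hr)) (Continuous.integrableOn_Icc (by fun_prop))
    calc
      w p ≤ K * ∫ r in Icc 0 p, w r := hw p hp
      _ ≤ K * ∫ r in Icc 0 p, M * ((K * r.1 * r.2) ^ n / (n ! : ℝ) ^ 2) := by gcongr
      _ = M * ((K * p.1 * p.2) ^ (n + 1) / ((n + 1)! : ℝ) ^ 2) := by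
        rw [integral_const_mul, mul_left_comm, mul_setIntegral_pow_div_factorial_sq K hp.1]

theorem eq_zero_of_le_mul_setIntegral {w : ℝ × ℝ → ℝ} {K : ℝ} {q : ℝ × ℝ}
    (hK : 0 ≤ K) (hw_nonneg : ∀ p ∈ Icc 0 q, 0 ≤ w p) (hw_bdd : BddAbove (w '' Icc 0 q))
    (hw : ∀ p ∈ Icc 0 q, w p ≤ K * ∫ r in Icc 0 p, w r) :
    ∀ p ∈ Icc 0 q, w p = 0 := by
  obtain ⟨M, hM⟩ := hw_bdd
  intro p hp
  have tendsto_zero :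
      Tendsto (fun n : ℕ ↦ M * ((K * p.1 * p.2) ^ n / (n ! : ℝ) ^ 2)) atTop (𝓝 0) := by
    simpa using (summable_pow_div_factorial_sq (K * p.1 * p.2)).tendsto_atTop_zero.const_mul M
  refine (ge_of_tendsto' tendsto_zero fun n ↦ ?_).antisymm (hw_nonneg p hp)
  exact le_mul_pow_div_factorial_sq_of_le_mul_setIntegral hK hw_nonneg
    (fun r hr ↦ hM (mem_image_of_mem w hr)) hw n p hp

section PlanarEquation

variable {E : Type*} [NormedAddCommGroup E] [NormedSpace ℝ E]

theorem eqOn_of_eq_add_smul_setIntegral {𝕜 : Type*} [NormedField 𝕜] [NormedSpace 𝕜 E] {a : 𝕜}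
    {f g b : ℝ × ℝ → E} {q : ℝ × ℝ}
    (hf : ContinuousOn f (Icc 0 q)) (hg : ContinuousOn g (Icc 0 q))
    (hf_eq : ∀ p ∈ Icc 0 q, f p = b p + a • ∫ r in Icc 0 p, f r)
    (hg_eq : ∀ p ∈ Icc 0 q, g p = b p + a • ∫ r in Icc 0 p, g r) :
    EqOn f g (Icc 0 q) := by
  have norm_sub_le : ∀ p ∈ Icc 0 q, ‖f p - g p‖ ≤ ‖a‖ * ∫ r in Icc 0 p, ‖f r - g r‖ := by
    intro p hp
    have Icc_subset : Icc 0 p ⊆ Icc 0 q := Icc_subset_Icc_right hp.2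
    have sub_eq : f p - g p = a • ∫ r in Icc 0 p, (f r - g r) := by
      rw [integral_sub (hf.mono Icc_subset).integrableOn_Icc
        (hg.mono Icc_subset).integrableOn_Icc, smul_sub, hf_eq p hp,
        hg_eq p hp, add_sub_add_left_eq_sub]
    rw [sub_eq, norm_smul]
    gcongr
    exact norm_integral_le_integral_norm _
  intro p hp
  exact sub_eq_zero.1 <| norm_eq_zero.1 <| eq_zero_of_le_mul_setIntegral (norm_nonneg a)
    (fun _ _ ↦ norm_nonneg _) (isCompact_Icc.bddAbove_image (hf.sub hg).norm) norm_sub_le p hp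

variable [CompleteSpace E]

theorem h₀_smul_eq_add_smul_setIntegral (a : ℝ) (c : E) {p : ℝ × ℝ} (hp : 0 ≤ p) :
    h₀ (a * p.1 * p.2) • c = c + a • ∫ r in Icc 0 p, h₀ (a * r.1 * r.2) • c := by
  rw [integral_smul_const, h₀_eq_one_add_mul_setIntegral a hp, add_smul, one_smul, mul_smul]

theorem stmt_1_general {a S T : ℝ} {c : E} {g : ℝ × ℝ → E}
    (hg : ContinuousOn g (Icc 0 S ×ˢ Icc 0 T))
    (heq : ∀ s t : ℝ, s ∈ Icc 0 S → t ∈ Icc 0 T →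
      g (s, t) = c + a • ∫ u in (0 : ℝ)..s, ∫ v in (0 : ℝ)..t, g (u, v)) :
    ∀ s t : ℝ, s ∈ Icc 0 S → t ∈ Icc 0 T → g (s, t) = h₀ (a * s * t) • c := by
  rw [Icc_prod_Icc] at hg
  have g_eq : ∀ p ∈ Icc 0 (S, T), g p = c + a • ∫ r in Icc 0 p, g r := by
    intro p hp
    rw [← intervalIntegral_intervalIntegral_eq_setIntegral_Icc hp.1
      (hg.mono (Icc_subset_Icc_right hp.2)).integrableOn_Icc]
    exact heq p.1 p.2 ⟨hp.1.1, hp.2.1⟩ ⟨hp.1.2, hp.2.2⟩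
  have h₀_continuous : Continuous fun p : ℝ × ℝ ↦ h₀ (a * p.1 * p.2) • c :=
    (continuous_h₀.comp (by fun_prop)).smul continuous_const
  intro s t hs ht
  exact eqOn_of_eq_add_smul_setIntegral hg h₀_continuous.continuousOn g_eq
    (fun p hp ↦ h₀_smul_eq_add_smul_setIntegral a c hp.1)
    (show (s, t) ∈ Icc 0 (S, T) from ⟨⟨hs.1, ht.1⟩, hs.2, ht.2⟩)

end PlanarEquation

/-- Uniqueness: any continuous solution of the deterministic planar equation
`g(s,t) = 1 + a·∫₀^s ∫₀^t g(u,v) dv du` on `[0,S] × [0,T]` equals `h₀(a·s·t)`. -/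
theorem stmt_1 (a S T : ℝ) (hS : 0 < S) (hT : 0 < T) (g : ℝ × ℝ → ℝ)
    (hg : ContinuousOn g (Set.Icc 0 S ×ˢ Set.Icc 0 T))
    (heq : ∀ s t : ℝ, s ∈ Set.Icc 0 S → t ∈ Set.Icc 0 T →
      g (s, t) = 1 + a * ∫ u in (0:ℝ)..s, ∫ v in (0:ℝ)..t, g (u, v)) :
    ∀ s t : ℝ, s ∈ Set.Icc 0 S → t ∈ Set.Icc 0 T → g (s, t) = h₀ (a * s * t) := by
  simpa only [smul_eq_mul, mul_one] using stmt_1_general hg heq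
end

section
/- Fix a, b ∈ ℝ. For n ≥ 0 define f_n(t₁,…,t_n,t) = (aⁿ/n!)·e^{bt}·Π_{j=1}^n 1_{[0,t]}(t_j) (with f₀(t) = e^{bt}). Then for every n ≥ 1, every t ≥ 0 and all pairwise distinct t₁,…,t_n ≥ 0, the recurrence f_n(t₁,…,t_n,t) = (a/n)·Σ_{i=1}^n f_{n−1}(t₁,…,t̂_i,…,t_n, t_i)·1_{[0,t]}(t_i) + b·∫₀^t f_n(t₁,…,t_n,r) dr holds, where t̂_i means that the variable t_i is omitted from the list and the sum (a/n)·Σ_i is the symmetrization in the n variables t₁,…,t_n of a·f_{n−1}(t₁,…,t_{n−1},t_n)·1_{[0,t]}(t_n). (These are the chaos kernels of the one-parameter linear Skorohod equation with drift X_t = 1 + ∫₀^t aX_s δB^α_s + ∫₀^t bX_s ds.) -/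
/-- The indicator function of the interval `[0,r]`. -/
noncomputable def ind (r x : ℝ) : ℝ := if 0 ≤ x ∧ x ≤ r then 1 else 0

/-- The chaos kernels `f_n(t₁,…,t_n,t) = (aⁿ/n!)·e^{bt}·Π_{j=1}^n 1_{[0,t]}(t_j)`
of the one-parameter linear Skorohod equation with drift. -/
noncomputable def f (a b : ℝ) (n : ℕ) (ts : Fin n → ℝ) (t : ℝ) : ℝ :=
  a ^ n / (n.factorial : ℝ) * Real.exp (b * t) * ∏ j : Fin n, ind t (ts j)

/-!
If `m` is the index of the largest of the variables, then for `i ≠ m` the factor `1_{[0,tᵢ]}(tₘ)`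
kills the `i`-th term of the symmetrization, and once `tₘ ≤ r` the other indicators no longer depend
on `r`. Up to the common factor `(a / (n + 1)) f_n(…, t̂ₘ, …, tₘ)`, the recurrence is thus the
integrated form of `y' = b y`, started from the value `1` at time `tₘ`.
-/

open MeasureTheory Set

section Indicator

variable {r x M : ℝ}

lemma ind_of_nonneg_of_le (hx : 0 ≤ x) (hxr : x ≤ r) : ind r x = 1 := if_pos ⟨hx, hxr⟩

lemma ind_of_lt (h : r < x) : ind r x = 0 := if_neg fun hx => h.not_ge hx.2

lemma ind_eq_ind_of_le_of_le (hxM : x ≤ M) (hMr : M ≤ r) : ind r x = ind M x := by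
  simp only [ind, hxM, hxM.trans hMr]

lemma prod_ind_mul_ind {ι : Type*} {s : Finset ι} {y : ι → ℝ} (hy : ∀ j ∈ s, y j ≤ M) :
    (∏ j ∈ s, ind r (y j)) * ind r M = (∏ j ∈ s, ind M (y j)) * ind r M := by
  rcases le_or_gt M r with hMr | hrM
  · rw [Finset.prod_congr rfl fun j hj => ind_eq_ind_of_le_of_le (hy j hj) hMr]
  · simp only [ind_of_lt hrM, mul_zero]

end Indicator

section Integral

variable {E : Type*} [NormedAddCommGroup E] [NormedSpace ℝ E] {M t : ℝ}

lemma integral_ind_smul_of_le (g : ℝ → E) (hM : 0 ≤ M) (hMt : M ≤ t) :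
    ∫ r in (0 : ℝ)..t, ind r M • g r = ∫ r in M..t, g r := by
  have hind : (fun r => ind r M • g r) = (Ici M).indicator g := by
    ext r
    simp [ind, hM, indicator_apply]
  have hae : (Ici M).indicator g =ᵐ[volume] (Ioi M).indicator g :=
    indicator_ae_eq_of_ae_eq_set Ioi_ae_eq_Ici.symm
  rw [hind, intervalIntegral.integral_of_le (hM.trans hMt), intervalIntegral.integral_of_le hMt,
    integral_congr_ae (ae_restrict_of_ae hae), setIntegral_indicator measurableSet_Ioi,
    Ioc_inter_Ioi, max_eq_right hM]

lemma integral_ind_smul_eq_zero (g : ℝ → E) (h : ¬(0 ≤ M ∧ M ≤ t)) :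
    ∫ r in (0 : ℝ)..t, ind r M • g r = 0 := by
  have vanish : EqOn (fun r => ind r M • g r) (fun _ => 0) (uIoo 0 t) := fun r hr => by
    have hrM : ¬(0 ≤ M ∧ M ≤ r) := fun ⟨hM, hMr⟩ =>
      (lt_sup_iff.mp hr.2).elim (hM.trans hMr).not_gt fun hrt => h ⟨hM, hMr.trans hrt.le⟩
    simp only [ind, if_neg hrM, zero_smul]
  rw [intervalIntegral.integral_congr_uIoo vanish, intervalIntegral.integral_zero]

lemma ind_smul_eq_add_integral_of_hasDerivAt [CompleteSpace E] {g g' : ℝ → E}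
    (hderiv : ∀ r ∈ uIcc M t, HasDerivAt g (g' r) r) (hint : IntervalIntegrable g' volume M t) :
    ind t M • g t = ind t M • g M + ∫ r in (0 : ℝ)..t, ind r M • g' r := by
  by_cases h : 0 ≤ M ∧ M ≤ t
  · rw [integral_ind_smul_of_le g' h.1 h.2,
      intervalIntegral.integral_eq_sub_of_hasDerivAt hderiv hint, ind_of_nonneg_of_le h.1 h.2]
    simp only [one_smul, add_sub_cancel]
  · rw [integral_ind_smul_eq_zero g' h]
    simp only [ind, if_neg h, zero_smul, add_zero]

end Integral

lemma ind_mul_exp_eq_add_integral (b M t : ℝ) :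
    ind t M * Real.exp (b * (t - M))
      = ind t M + b * ∫ r in (0 : ℝ)..t, ind r M * Real.exp (b * (r - M)) := by
  have hderiv (r : ℝ) :
      HasDerivAt (fun r => Real.exp (b * (r - M))) (b * Real.exp (b * (r - M))) r := by
    simpa [mul_comm] using (((hasDerivAt_id r).sub_const M).const_mul b).exp
  have hint : IntervalIntegrable (fun r => b * Real.exp (b * (r - M))) volume M t :=
    Continuous.intervalIntegrable (by fun_prop) M t
  simpa [mul_left_comm _ b] using
    ind_smul_eq_add_integral_of_hasDerivAt (fun r _ => hderiv r) hint

section Kernel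

variable (a b : ℝ) {n : ℕ} {ts : Fin (n + 1) → ℝ}

lemma f_succAbove_eq_zero {i m : Fin (n + 1)} (h : ts i < ts m) :
    f a b n (fun j => ts (i.succAbove j)) (ts i) = 0 := by
  obtain ⟨j, rfl⟩ := Fin.exists_succAbove_eq (ne_of_apply_ne ts h.ne')
  rw [f, Finset.prod_eq_zero (Finset.mem_univ j) (ind_of_lt h), mul_zero]

lemma f_succ_eq_of_forall_le {m : Fin (n + 1)} (hm : ∀ i, ts i ≤ ts m) (r : ℝ) :
    f a b (n + 1) ts r = a / (n + 1) * f a b n (fun j => ts (m.succAbove j)) (ts m) *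
      (ind r (ts m) * Real.exp (b * (r - ts m))) := by
  have hprod := prod_ind_mul_ind (r := r) (s := Finset.univ) fun j _ => hm (m.succAbove j)
  have hexp : Real.exp (b * r) = Real.exp (b * ts m) * Real.exp (b * (r - ts m)) := by
    rw [← Real.exp_add]
    ring_nf
  have hcoeff : a ^ (n + 1) / ((n + 1).factorial : ℝ) = a / (n + 1) * (a ^ n / n.factorial) := by
    rw [pow_succ', Nat.factorial_succ, Nat.cast_mul, Nat.cast_succ, mul_div_mul_comm]
  rw [f, f, Fin.prod_univ_succAbove _ m, mul_comm (ind r (ts m)), hprod, hexp, hcoeff]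
  ring

theorem stmt_4_general (t : ℝ) {m : Fin (n + 1)} (hm : ∀ i, i ≠ m → ts i < ts m) :
    f a b (n + 1) ts t
      = (a / (n + 1)) *
          ∑ i : Fin (n + 1), f a b n (fun j => ts (i.succAbove j)) (ts i) * ind t (ts i)
        + b * ∫ r in (0:ℝ)..t, f a b (n + 1) ts r := by
  have hmax (i : Fin (n + 1)) : ts i ≤ ts m :=
    (eq_or_ne i m).elim (fun h => h ▸ le_rfl) fun h => (hm i h).le
  have hsum : ∑ i, f a b n (fun j => ts (i.succAbove j)) (ts i) * ind t (ts i)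
      = f a b n (fun j => ts (m.succAbove j)) (ts m) * ind t (ts m) :=
    Fintype.sum_eq_single m fun i hi => by rw [f_succAbove_eq_zero a b (hm i hi), zero_mul]
  simp only [hsum, f_succ_eq_of_forall_le a b hmax, intervalIntegral.integral_const_mul]
  rw [ind_mul_exp_eq_add_integral b (ts m) t]
  ring

end Kernel

/-- The recurrence satisfied by the chaos kernels of the one-parameter linear
Skorohod equation `X_t = 1 + ∫₀^t aX_s δB^α_s + ∫₀^t bX_s ds`: for `n ≥ 1`
(here written with `n+1` in place of `n`), `t ≥ 0` and pairwise distinct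
nonnegative `t₁,…,t_{n+1}`,
`f_{n+1}(t₁,…,t_{n+1},t) = (a/(n+1))·Σ_i f_n(t₁,…,t̂_i,…,t_{n+1},t_i)·1_{[0,t]}(t_i)
  + b·∫₀^t f_{n+1}(t₁,…,t_{n+1},r) dr`. -/
theorem stmt_4 (a b : ℝ) (n : ℕ) (t : ℝ) (ht : 0 ≤ t) (ts : Fin (n + 1) → ℝ)
    (hnonneg : ∀ i, 0 ≤ ts i) (hdist : Function.Injective ts) :
    f a b (n + 1) ts t
      = (a / (n + 1)) *
          ∑ i : Fin (n + 1), f a b n (fun j => ts (i.succAbove j)) (ts i) * ind t (ts i)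
        + b * ∫ r in (0:ℝ)..t, f a b (n + 1) ts r := by
  obtain ⟨m, hm⟩ := Finite.exists_max ts
  exact stmt_4_general a b t fun i hi => (hm i).lt_of_ne (hdist.ne hi)
end

section
/- Let α ∈ (1/2, 1) and t > 0. The function u ↦ (t^{1/2−α} − u^{1/2−α})·(t−u)^{−1/2−α} is Lebesgue integrable on (0,t), the constant c(α) := ∫₀^1 (1 − w^{1/2−α})·(1−w)^{−1/2−α} dw is finite, and ∫₀^t (t^{1/2−α} − u^{1/2−α})·(t−u)^{−1/2−α} du = c(α)·t^{1−2α}. (Note that u ↦ (t−u)^{−1/2−α} alone is not integrable near u = t when α > 1/2; the difference structure is essential.) -/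
open MeasureTheory

/-!
The factor `1 - w ^ p` vanishes to first order at `w = 1` and is `O(w ^ min p 0)` at `w = 0`, so
`(1 - w ^ p) * (1 - w) ^ q` is dominated by the Beta integrand `w ^ min p 0 * (1 - w) ^ (q + 1)`,
which is integrable for `-1 < p` and `-2 < q`. The kernel `(t ^ p - u ^ p) * (t - u) ^ q` is
homogeneous of degree `p + q`, and the substitution `u = t * w` contributes one more power of `t`.
-/

open Set

section Scaling

variable {E : Type*} [NormedAddCommGroup E] {f : ℝ → E} {s : Set ℝ} {t : ℝ}

lemma integrableOn_comp_div (hf : IntegrableOn f s) (hs : MeasurableSet s) (ht : t ≠ 0) :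
    IntegrableOn (fun u => f (u / t)) ((· / t) ⁻¹' s) := by
  rw [← integrable_indicator_iff (measurable_div_const t hs)]
  exact (hf.integrable_indicator hs).comp_div ht

lemma setIntegral_comp_div [NormedSpace ℝ E] (f : ℝ → E) (hs : MeasurableSet s) (t : ℝ) :
    ∫ u in (· / t) ⁻¹' s, f (u / t) = |t| • ∫ w in s, f w := by
  rw [← integral_indicator (measurable_div_const t hs), ← integral_indicator hs]
  exact Measure.integral_comp_div (s.indicator f) t

end Scaling

variable {p q t u w : ℝ}

lemma integrableOn_Ioo_rpow_mul_one_sub_rpow (hp : -1 < p) (hq : -1 < q) :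
    IntegrableOn (fun w : ℝ => w ^ p * (1 - w) ^ q) (Ioo 0 1) := by
  have hbeta := (Complex.betaIntegral_convergent (u := (p + 1 : ℝ)) (v := (q + 1 : ℝ))
    (by simp only [Complex.ofReal_re]; linarith) (by simp only [Complex.ofReal_re]; linarith)).norm
  rw [intervalIntegrable_iff_integrableOn_Ioo_of_le zero_le_one] at hbeta
  refine hbeta.congr_fun (fun w hw => ?_) measurableSet_Ioo
  have hw' : 0 < 1 - w := sub_pos.mpr hw.2
  dsimp only
  rw [norm_mul, ← Complex.ofReal_one, ← Complex.ofReal_sub 1 w,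
    Complex.norm_cpow_eq_rpow_re_of_pos hw.1, Complex.norm_cpow_eq_rpow_re_of_pos hw']
  simp only [← Complex.ofReal_sub, Complex.ofReal_re, add_sub_cancel_right]

lemma abs_one_sub_rpow_le_of_nonpos (hp : -1 ≤ p) (hp' : p ≤ 0) (hw : w ∈ Ioo 0 1) :
    |1 - w ^ p| ≤ w ^ p * (1 - w) := by
  have one_le : 1 ≤ w ^ p := Real.one_le_rpow_of_pos_of_le_one_of_nonpos hw.1 hw.2.le hp'
  have mul_le_one : w ^ p * w ≤ 1 := by
    rw [← Real.rpow_add_one hw.1.ne']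
    exact Real.rpow_le_one hw.1.le hw.2.le (by linarith)
  rw [abs_of_nonpos (by linarith)]
  linarith

lemma abs_one_sub_rpow_le_of_nonneg (hp : 0 ≤ p) (hw : w ∈ Ioo 0 1) :
    |1 - w ^ p| ≤ max 1 p * (1 - w) := by
  rw [abs_of_nonneg (sub_nonneg.mpr (Real.rpow_le_one hw.1.le hw.2.le hp))]
  have bernoulli : 1 + max 1 p * (w - 1) ≤ w ^ max 1 p := by
    simpa only [add_sub_cancel] using
      one_add_mul_self_le_rpow_one_add (s := w - 1) (by linarith [hw.1]) (le_max_left 1 p)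
  have mono : w ^ max 1 p ≤ w ^ p :=
    Real.rpow_le_rpow_of_exponent_ge hw.1 hw.2.le (le_max_right 1 p)
  linarith

lemma abs_one_sub_rpow_le (hp : -1 ≤ p) (hw : w ∈ Ioo 0 1) :
    |1 - w ^ p| ≤ max 1 p * (w ^ min p 0 * (1 - w)) := by
  rcases le_total p 0 with hp' | hp'
  · simpa only [max_eq_left (hp'.trans zero_le_one), min_eq_left hp', one_mul] using
      abs_one_sub_rpow_le_of_nonpos hp hp' hw
  · simpa only [min_eq_right hp', Real.rpow_zero, one_mul] using
      abs_one_sub_rpow_le_of_nonneg hp' hw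

lemma integrableOn_Ioo_one_sub_rpow_mul_one_sub_rpow (hp : -1 < p) (hq : -2 < q) :
    IntegrableOn (fun w : ℝ => (1 - w ^ p) * (1 - w) ^ q) (Ioo 0 1) := by
  have hbeta := integrableOn_Ioo_rpow_mul_one_sub_rpow (p := min p 0) (q := q + 1)
    (lt_min hp (by norm_num)) (by linarith)
  refine (hbeta.const_mul (max 1 p)).mono' (by fun_prop) ?_
  filter_upwards [ae_restrict_mem measurableSet_Ioo] with w hw
  have hw' : 0 < 1 - w := sub_pos.mpr hw.2
  calc ‖(1 - w ^ p) * (1 - w) ^ q‖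
      = |1 - w ^ p| * (1 - w) ^ q := by
        rw [norm_mul, Real.norm_eq_abs, Real.norm_of_nonneg (Real.rpow_nonneg hw'.le q)]
    _ ≤ max 1 p * (w ^ min p 0 * (1 - w)) * (1 - w) ^ q := by
        gcongr
        exact abs_one_sub_rpow_le hp.le hw
    _ = max 1 p * (w ^ min p 0 * (1 - w) ^ (q + 1)) := by
        rw [Real.rpow_add_one hw'.ne']
        ring

lemma rpow_sub_rpow_mul_sub_rpow_eq (ht : 0 < t) (hu : u ∈ Icc 0 t) :
    (t ^ p - u ^ p) * (t - u) ^ q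
      = t ^ (p + q) * ((1 - (u / t) ^ p) * (1 - u / t) ^ q) := by
  have hfst : t ^ p - u ^ p = t ^ p * (1 - (u / t) ^ p) := by
    rw [Real.div_rpow hu.1 ht.le]
    field_simp
  have hsnd : (t - u) ^ q = t ^ q * (1 - u / t) ^ q := by
    rw [← Real.mul_rpow ht.le (sub_nonneg.mpr (div_le_one_of_le₀ hu.2 ht.le)), mul_one_sub,
      mul_div_cancel₀ u ht.ne']
  rw [hfst, hsnd, Real.rpow_add ht]
  ring

theorem stmt_10_general (hp : -1 < p) (hq : -2 < q) (ht : 0 < t) :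
    IntegrableOn (fun u : ℝ => (t ^ p - u ^ p) * (t - u) ^ q) (Ioo 0 t) ∧
    IntegrableOn (fun w : ℝ => (1 - w ^ p) * (1 - w) ^ q) (Ioo 0 1) ∧
    ∫ u in Ioo 0 t, (t ^ p - u ^ p) * (t - u) ^ q
      = (∫ w in Ioo (0 : ℝ) 1, (1 - w ^ p) * (1 - w) ^ q) * t ^ (p + q + 1) := by
  have hunit := integrableOn_Ioo_one_sub_rpow_mul_one_sub_rpow hp hq
  have hhom : EqOn (fun u => (t ^ p - u ^ p) * (t - u) ^ q)
      (fun u => t ^ (p + q) * ((1 - (u / t) ^ p) * (1 - u / t) ^ q)) (Ioo 0 t) :=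
    fun u hu => rpow_sub_rpow_mul_sub_rpow_eq ht (Ioo_subset_Icc_self hu)
  have hpre : (· / t) ⁻¹' Ioo 0 1 = Ioo 0 t := by
    ext u
    simp only [mem_preimage, mem_Ioo, div_pos_iff_of_pos_right ht, div_lt_one ht]
  refine ⟨?_, hunit, ?_⟩
  · rw [integrableOn_congr_fun hhom measurableSet_Ioo, ← hpre]
    exact (integrableOn_comp_div hunit measurableSet_Ioo ht.ne').const_mul (t ^ (p + q))
  · have hsubst := setIntegral_comp_div (fun w => (1 - w ^ p) * (1 - w) ^ q)
      (measurableSet_Ioo (a := 0) (b := 1)) t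
    rw [hpre, abs_of_pos ht, smul_eq_mul] at hsubst
    rw [setIntegral_congr_fun measurableSet_Ioo hhom, integral_const_mul, hsubst,
      Real.rpow_add_one ht.ne']
    ring

/-- For `α ∈ (1/2,1)` and `t > 0`, `u ↦ (t^{1/2−α} − u^{1/2−α})·(t−u)^{−1/2−α}`
is Lebesgue integrable on `(0,t)`, the constant
`c(α) = ∫₀^1 (1 − w^{1/2−α})·(1−w)^{−1/2−α} dw` is finite (the integrand is
integrable on `(0,1)`), and
`∫₀^t (t^{1/2−α} − u^{1/2−α})·(t−u)^{−1/2−α} du = c(α)·t^{1−2α}`. -/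
theorem stmt_10 (α t : ℝ) (hα : α ∈ Set.Ioo (1/2:ℝ) 1) (ht : 0 < t) :
    IntegrableOn
      (fun u : ℝ => (t ^ ((1/2:ℝ) - α) - u ^ ((1/2:ℝ) - α)) * (t - u) ^ (-(1/2:ℝ) - α))
      (Set.Ioo 0 t) ∧
    IntegrableOn
      (fun w : ℝ => (1 - w ^ ((1/2:ℝ) - α)) * (1 - w) ^ (-(1/2:ℝ) - α))
      (Set.Ioo (0:ℝ) 1) ∧
    ∫ u in Set.Ioo 0 t, (t ^ ((1/2:ℝ) - α) - u ^ ((1/2:ℝ) - α)) * (t - u) ^ (-(1/2:ℝ) - α)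
      = (∫ w in Set.Ioo (0:ℝ) 1, (1 - w ^ ((1/2:ℝ) - α)) * (1 - w) ^ (-(1/2:ℝ) - α)) *
          t ^ (1 - 2 * α) := by
  rw [show 1 - 2 * α = (1 / 2 - α) + (-(1 / 2) - α) + 1 by ring]
  exact stmt_10_general (by linarith [hα.2]) (by linarith [hα.2]) ht
end
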